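/- Let δ be an increment function of size n and let [P,Q] be a right interval of height k ≥ 2 in the alt-Tamari poset Tam^δ_n, i.e. P = A d C_1⋯C_k B and Q = A C_1⋯C_k d B where each C_j is the δ-excursion in P of its first up step. Then P ≤ Q in Tam^δ_n and the interval [P,Q] is linear of height k. -/

import Mathlib

/-!
Common definitions.  A letter of a word is a `Bool`: `true` is an up step `u`,
`false` is a down step `d`.  Positions in words are 0-based.
-/

/-- A (possibly empty) Dyck word: as many `u`'s as `d`'s, and every
prefix has at least as many `u`'s as `d`'s. -/
def IsDyckPath (w : List Bool) : Prop :=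
  w.count true = w.count false ∧ ∀ p, p <+: w → p.count false ≤ p.count true

/-- A Dyck word of size `n`: `n` up steps, `n` down steps, every prefix has
at least as many `u`'s as `d`'s. -/
def IsDyckWord (n : ℕ) (w : List Bool) : Prop :=
  w.count true = n ∧ w.count false = n ∧ ∀ p, p <+: w → p.count false ≤ p.count true

/-- The set of Dyck words of size `n`. -/
def DyckSet (n : ℕ) : Set (List Bool) := {w | IsDyckWord n w}

/-- An increment function: a `{0,1}`-valued function (the paper's `δ : {1,…,n} → {0,1}`;
only the values on `{1,…,n}` are ever used). -/
def IsIncFun (δ : ℕ → ℤ) : Prop := ∀ i, δ i = 0 ∨ δ i = 1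

/-- The 0-based position in `w` of the `i`-th up step `u_i` (`i` is 1-based). -/
def upPos (w : List Bool) (i : ℕ) : ℕ :=
  ((List.range w.length).filter fun q => w.getD q false = true).getD (i - 1) 0

/-- `h_i(w)`: the (1-based, between 1 and 2n) position of the up step `u_i` in `w`. -/
def hpos (w : List Bool) (i : ℕ) : ℕ := upPos w i + 1

/-- The change of δ-altitude produced by the letter at position `q` of `w`:
the up step `u_i` contributes `δ i`, a down step contributes `-1`. -/
def stepVal (δ : ℕ → ℤ) (w : List Bool) (q : ℕ) : ℤ :=
  if w.getD q false = true then δ ((w.take (q + 1)).count true) else -1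

/-- The δ-elevation of the factor of `w` occupying positions `a, …, b-1`. -/
def elev (δ : ℕ → ℤ) (w : List Bool) (a b : ℕ) : ℤ :=
  ∑ q ∈ Finset.Ico a b, stepVal δ w q

/-- `C` is the δ-excursion of the up step of `w` at position `p`:
the smallest (nonempty) factor of `w` starting at `p` whose δ-elevation is `0`. -/
def IsDeltaExcAt (δ : ℕ → ℤ) (w : List Bool) (p : ℕ) (C : List Bool) : Prop :=
  w.getD p false = true ∧
  ∃ m, 0 < m ∧ p + m ≤ w.length ∧ C = (w.drop p).take m ∧
    elev δ w p (p + m) = 0 ∧ ∀ m', 0 < m' → m' < m → elev δ w p (p + m') ≠ 0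

/-- `C` is the excursion of the up step of `w` at position `p`: the smallest factor
of `w` starting at `p` that is itself a Dyck word. -/
def IsExcursionAt (w : List Bool) (p : ℕ) (C : List Bool) : Prop :=
  w.getD p false = true ∧
  ∃ m, 0 < m ∧ p + m ≤ w.length ∧ C = (w.drop p).take m ∧ IsDyckPath C ∧
    ∀ m', 0 < m' → m' < m → ¬ IsDyckPath ((w.drop p).take m')

/-- `ℓ_i(w; δ)`: the length of the δ-excursion of `u_i` in `w`. -/
noncomputable def excLen (δ : ℕ → ℤ) (w : List Bool) (i : ℕ) : ℕ :=
  sInf {m | 0 < m ∧ elev δ w (upPos w i) (upPos w i + m) = 0}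

/-- `Q` is the δ-rotation of `P` at some up step: `P = A d C B` with `d u_i` a valley
and `C` the δ-excursion of `u_i`, and `Q = A C d B`. -/
def DeltaRot (δ : ℕ → ℤ) (P Q : List Bool) : Prop :=
  ∃ A C B, P = A ++ false :: (C ++ B) ∧ Q = A ++ (C ++ false :: B) ∧
    IsDeltaExcAt δ P (A.length + 1) C

/-- The alt-Tamari order `Tam^δ`: reflexive transitive closure of δ-rotations. -/
def altLE (δ : ℕ → ℤ) : List Bool → List Bool → Prop :=
  Relation.ReflTransGen (DeltaRot δ)

/-- The Tamari order: the alt-Tamari order for `δ ≡ 1` (the δ-excursion of any up step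
is then its excursion). -/
def tamLE : List Bool → List Bool → Prop := altLE fun _ => 1

/-- The height (number of `u`'s minus number of `d`'s) of the length-`j` prefix of `w`. -/
def prefHeight (w : List Bool) (j : ℕ) : ℤ :=
  ((w.take j).count true : ℤ) - ((w.take j).count false : ℤ)

/-- The Dyck (inclusion) order: every prefix height of `P` is at most that of `Q`. -/
def dyckLE (P Q : List Bool) : Prop := ∀ j, prefHeight P j ≤ prefHeight Q j

/-- Strict version of a relation `le`. -/
def ltOf (le : List Bool → List Bool → Prop) (P Q : List Bool) : Prop :=
  le P Q ∧ ¬ le Q P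

/-- There is a strict chain `P = c 0 < c 1 < ⋯ < c k = Q` inside `S`. -/
def HasChainIn (S : Set (List Bool)) (le : List Bool → List Bool → Prop)
    (P Q : List Bool) (k : ℕ) : Prop :=
  ∃ c : ℕ → List Bool, c 0 = P ∧ c k = Q ∧ (∀ i ≤ k, c i ∈ S) ∧
    ∀ i < k, ltOf le (c i) (c (i + 1))

/-- The interval `[P,Q]` of the poset `(S, le)` has height `k`: `k` is the maximal
length of a chain from `P` to `Q`. -/
def IntervalHeight (S : Set (List Bool)) (le : List Bool → List Bool → Prop)
    (P Q : List Bool) (k : ℕ) : Prop :=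
  HasChainIn S le P Q k ∧ ∀ m, HasChainIn S le P Q m → m ≤ k

/-- The interval `[P,Q]` of the poset `(S, le)` is linear: it is totally ordered. -/
def LinearInterval (S : Set (List Bool)) (le : List Bool → List Bool → Prop)
    (P Q : List Bool) : Prop :=
  P ∈ S ∧ Q ∈ S ∧ le P Q ∧
  ∀ R R', R ∈ S → R' ∈ S → le P R → le R Q → le P R' → le R' Q → le R R' ∨ le R' R

/-- `Q` covers `P` in the poset `(S, le)`. -/
def CovIn (S : Set (List Bool)) (le : List Bool → List Bool → Prop)
    (P Q : List Bool) : Prop :=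
  P ∈ S ∧ Q ∈ S ∧ ltOf le P Q ∧ ∀ R ∈ S, ¬ (ltOf le P R ∧ ltOf le R Q)

/-- The number of valleys (factors `du`) of `w`. -/
def valleys (w : List Bool) : ℕ :=
  ((List.range w.length).filter fun q => !w.getD q true && w.getD (q + 1) false).length

/-- The number of down steps preceding the up step of index `i` (0-based) in `w`;
all the down steps of `w` if there is no such up step. -/
def downsBefore : List Bool → ℕ → ℕ
  | [], _ => 0
  | false :: w, i => downsBefore w i + 1
  | true :: _, 0 => 0
  | true :: w, i + 1 => downsBefore w i

/-- The `δ`-altitude just before the up step of index `j` (0-based) of `w`, when `a` up steps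
come before `w`. -/
def altBefore (δ : ℕ → ℤ) (a : ℕ) (w : List Bool) (j : ℕ) : ℤ :=
  ∑ t ∈ Finset.range j, δ (a + t + 1) - downsBefore w j

/-- The `δ`-elevation of `w` as a factor preceded by `a` up steps. -/
def wordElev (δ : ℕ → ℤ) (a : ℕ) (w : List Bool) : ℤ :=
  ∑ t ∈ Finset.range (w.count true), δ (a + t + 1) - w.count false

/-- `C` is a `δ`-excursion when it is preceded by `a` up steps. -/
def IsExc (δ : ℕ → ℤ) (a : ℕ) (C : List Bool) : Prop :=
  (∃ C', C = true :: C') ∧ wordElev δ a C = 0 ∧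
    ∀ U V, C = U ++ V → U ≠ [] → V ≠ [] → wordElev δ a U ≠ 0

/-- The words of the list are consecutive `δ`-excursions, preceded by `a` up steps. -/
def AreExcs (δ : ℕ → ℤ) : ℕ → List (List Bool) → Prop
  | _, [] => True
  | a, C :: Cs => IsExc δ a C ∧ AreExcs δ (a + C.count true) Cs

theorem downsBefore_append_of_lt (u v : List Bool) (i : ℕ) (h : i < u.count true) :
    downsBefore (u ++ v) i = downsBefore u i := by
  induction u generalizing i with
  | nil => simp at h
  | cons b u ih =>
    cases b
    · simp [downsBefore] at h ⊢
      exact ih i h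
    · cases i with
      | zero => simp [downsBefore]
      | succ i =>
        simp [downsBefore] at h ⊢
        exact ih i h

theorem downsBefore_append_add (u v : List Bool) (i : ℕ) :
    downsBefore (u ++ v) (u.count true + i) = u.count false + downsBefore v i := by
  induction u with
  | nil => simp
  | cons b u ih =>
    cases b
    · simp [downsBefore, ih]
      omega
    · have : (true :: u).count true + i = (u.count true + i) + 1 := by simp; omega
      rw [this]
      simp [downsBefore, ih]

theorem downsBefore_le_count (w : List Bool) (i : ℕ) : downsBefore w i ≤ w.count false := by
  induction w generalizing i with
  | nil => simp [downsBefore]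
  | cons b w ih =>
    cases b
    · simpa [downsBefore] using ih i
    · cases i with
      | zero => simp [downsBefore]
      | succ i => simpa [downsBefore] using ih i

theorem downsBefore_le_succ (w : List Bool) (i : ℕ) :
    downsBefore w i ≤ downsBefore w (i + 1) := by
  induction w generalizing i with
  | nil => simp [downsBefore]
  | cons b w ih =>
    cases b
    · simpa [downsBefore] using ih i
    · cases i with
      | zero => simp [downsBefore]
      | succ i => simpa [downsBefore] using ih i

theorem exists_split_at_up (w : List Bool) (j : ℕ) (h : j < w.count true) :
    ∃ U V, w = U ++ true :: V ∧ U.count true = j ∧ downsBefore w j = U.count false := by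
  induction w generalizing j with
  | nil => simp at h
  | cons b w ih =>
    cases b
    · obtain ⟨U, V, rfl, h1, h2⟩ := ih j (by simpa using h)
      exact ⟨false :: U, V, by simp, by simpa using h1, by simp [downsBefore, h2]⟩
    · cases j with
      | zero => exact ⟨[], w, by simp [downsBefore]⟩
      | succ j =>
        obtain ⟨U, V, rfl, h1, h2⟩ := ih j (by simpa using h)
        exact ⟨true :: U, V, by simp, by simpa using h1, by simp [downsBefore, h2]⟩

/-- A splitting of a word at an up step is determined by the index of the up step. -/
theorem append_up_inj {X X' Y Y' : List Bool} (h : X ++ true :: Y = X' ++ true :: Y')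
    (hc : X.count true = X'.count true) : X = X' ∧ Y = Y' := by
  induction X generalizing X' with
  | nil =>
    cases X' with
    | nil => simpa using h
    | cons b X' => simp at h; simp [← h.1] at hc
  | cons b X ih =>
    cases X' with
    | nil => simp at h; simp [h.1] at hc
    | cons b' X' =>
      simp only [List.cons_append, List.cons.injEq] at h
      obtain ⟨rfl, h⟩ := h
      have := ih h (by cases b <;> simpa using hc)
      simp [this]

theorem wordElev_append (δ : ℕ → ℤ) (a : ℕ) (u v : List Bool) :
    wordElev δ a (u ++ v) = wordElev δ a u + wordElev δ (a + u.count true) v := by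
  simp only [wordElev, List.count_append, Finset.sum_range_add, Nat.cast_add, ← add_assoc]
  ring

theorem altBefore_append_add (δ : ℕ → ℤ) (a : ℕ) (u v : List Bool) (j : ℕ) :
    altBefore δ a (u ++ v) (u.count true + j) =
      wordElev δ a u + altBefore δ (a + u.count true) v j := by
  simp only [wordElev, altBefore, downsBefore_append_add, Finset.sum_range_add, Nat.cast_add,
    ← add_assoc]
  ring

theorem altBefore_succ_le {δ : ℕ → ℤ} (hδ : IsIncFun δ) (a : ℕ) (w : List Bool) (j : ℕ) :
    altBefore δ a w (j + 1) ≤ altBefore δ a w j + 1 := by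
  have h := downsBefore_le_succ w j
  simp only [altBefore, Finset.sum_range_succ]
  rcases hδ (a + j + 1) with h' | h' <;> rw [h'] <;> omega

theorem exists_prefix_altBefore (δ : ℕ → ℤ) (a : ℕ) (w : List Bool) (j : ℕ)
    (h : j < w.count true) :
    ∃ U V, w = U ++ true :: V ∧ U.count true = j ∧ altBefore δ a w j = wordElev δ a U := by
  obtain ⟨U, V, h1, h2, h3⟩ := exists_split_at_up w j h
  exact ⟨U, V, h1, h2, by simp [altBefore, wordElev, h2, h3]⟩

theorem elev_eq_wordElev (δ : ℕ → ℤ) (X C B : List Bool) :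
    elev δ (X ++ (C ++ B)) X.length (X.length + C.length) = wordElev δ (X.count true) C := by
  induction C using List.reverseRecOn generalizing B with
  | nil => simp [elev, wordElev]
  | append_singleton C b ih =>
    have hs : elev δ (X ++ (C ++ [b] ++ B)) X.length (X.length + (C ++ [b]).length) =
        elev δ (X ++ (C ++ ([b] ++ B))) X.length (X.length + C.length) +
          stepVal δ (X ++ (C ++ ([b] ++ B))) (X.length + C.length) := by
      simp only [elev, List.length_append, List.length_singleton, ← add_assoc,
        List.append_assoc]
      rw [Finset.sum_Ico_succ_top (by omega)]
    have hsplit : X ++ (C ++ ([b] ++ B)) = (X ++ C ++ [b]) ++ B := by simp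
    have ht : (X ++ (C ++ ([b] ++ B))).take (X.length + C.length + 1) = X ++ C ++ [b] := by
      rw [hsplit, List.take_left' (by simp [add_assoc])]
    have hg : (X ++ (C ++ ([b] ++ B))).getD (X.length + C.length) false = b := by
      simp [List.getD_eq_getElem?_getD]
    rw [hs, ih, wordElev_append, stepVal, ht, hg]
    cases b <;> simp [wordElev, add_assoc]

theorem isDeltaExcAt_iff (δ : ℕ → ℤ) (X C B : List Bool) :
    IsDeltaExcAt δ (X ++ (C ++ B)) X.length C ↔ IsExc δ (X.count true) C := by
  constructor
  · rintro ⟨h1, m, hm, hle, hC, h0, hmin⟩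
    have hCm : C.length = m := by
      have := congrArg List.length hC
      simp only [List.length_take, List.length_drop] at this
      omega
    subst hCm
    refine ⟨?_, ?_, ?_⟩
    · cases C with
      | nil => simp at hm
      | cons b C =>
        simp [List.getD_eq_getElem?_getD] at h1
        exact ⟨C, by rw [h1]⟩
    · rw [← elev_eq_wordElev δ X C B, h0]
    · rintro U V rfl hU hV
      have := hmin U.length (List.length_pos_iff.2 hU)
        (by have := List.length_pos_iff.2 hV; simp; omega)
      rwa [List.append_assoc, elev_eq_wordElev] at this
  · rintro ⟨⟨C', hC'⟩, h0, hmin⟩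
    refine ⟨?_, C.length, by simp [hC'], by simp, by simp, ?_, ?_⟩
    · simp [hC', List.getD_eq_getElem?_getD]
    · rw [elev_eq_wordElev, h0]
    · intro m' h1 h2
      have hs : C = C.take m' ++ C.drop m' := by simp
      have hl : (C.take m').length = m' := by simp; omega
      have := hmin _ _ hs (List.length_pos_iff.1 (by omega))
        (List.length_pos_iff.1 (by simp; omega))
      rwa [← elev_eq_wordElev δ X (C.take m') (C.drop m' ++ B), ← List.append_assoc (C.take m'),
        ← hs, hl] at this

theorem IsExc.pos_of_prefix {δ : ℕ → ℤ} (hδ : IsIncFun δ) {a : ℕ} {C : List Bool}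
    (hC : IsExc δ a C) (U V : List Bool) (h : C = U ++ V) (hU : U ≠ []) (hV : V ≠ []) :
    0 < wordElev δ a U := by
  induction U using List.reverseRecOn generalizing V with
  | nil => exact absurd rfl hU
  | append_singleton U b ih =>
    have hne := hC.2.2 _ _ h hU hV
    have hb : -1 ≤ wordElev δ (a + U.count true) [b] := by
      cases b
      · simp [wordElev]
      · rcases hδ (a + U.count true + 1) with h' | h' <;> simp [wordElev, h']
    rcases eq_or_ne U [] with rfl | hU'
    · obtain ⟨C', hC'⟩ := hC.1
      have : b = true := by rw [hC'] at h; simp at h; exact h.1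
      subst this
      rcases hδ (a + 1) with h' | h' <;> simp [wordElev, h'] at hne ⊢
    · have := ih (b :: V) (by simp [h]) hU' (by simp)
      rw [wordElev_append] at hne ⊢
      omega

theorem IsExc.eq_of_append_eq {δ : ℕ → ℤ} {a : ℕ} {C C' B B' : List Bool}
    (hC : IsExc δ a C) (hC' : IsExc δ a C') (h : C ++ B = C' ++ B') : C = C' := by
  have key : ∀ {C C' : List Bool}, IsExc δ a C → IsExc δ a C' → C <+: C' → C = C' := by
    rintro C _ hC hC' ⟨V, rfl⟩
    by_contra hne
    obtain ⟨C₁, rfl⟩ := hC.1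
    exact hC'.2.2 _ V rfl (by simp) (by rintro rfl; simp at hne) hC.2.1
  rcases List.prefix_or_prefix_of_prefix (List.prefix_append C B)
    (h ▸ List.prefix_append C' B') with h' | h'
  · exact key hC hC' h'
  · exact (key hC' hC h').symm

theorem AreExcs.nonneg_of_prefix {δ : ℕ → ℤ} (hδ : IsIncFun δ) {a : ℕ} {Cs : List (List Bool)}
    (hC : AreExcs δ a Cs) (U V : List Bool) (h : Cs.flatten = U ++ V) :
    0 ≤ wordElev δ a U := by
  induction Cs generalizing a U with
  | nil =>
    have : U = [] := by simp at h; exact h.1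
    simp [this, wordElev]
  | cons C Cs ih =>
    rw [List.flatten_cons, List.append_eq_append_iff] at h
    rcases h with ⟨U', rfl, h⟩ | ⟨C', rfl, h⟩
    · rw [wordElev_append, hC.1.2.1, zero_add]
      exact ih hC.2 U' h
    · rcases eq_or_ne U [] with rfl | hU
      · simp [wordElev]
      · rcases eq_or_ne C' [] with rfl | hC'
        · have := hC.1.2.1
          simp only [List.append_nil] at this
          exact this.ge
        · exact (hC.1.pos_of_prefix hδ _ _ rfl hU hC').le

theorem areExcs_of_isDeltaExcAt (δ : ℕ → ℤ) (X B : List Bool) (Cs : List (List Bool))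
    (h : ∀ j < Cs.length, IsDeltaExcAt δ (X ++ (Cs.flatten ++ B))
      (X.length + (Cs.take j).flatten.length) (Cs.getD j [])) :
    AreExcs δ (X.count true) Cs := by
  induction Cs generalizing X with
  | nil => trivial
  | cons C Cs ih =>
    refine ⟨?_, ?_⟩
    · have := h 0 (by simp)
      simp only [List.flatten_cons, List.append_assoc] at this
      exact (isDeltaExcAt_iff δ X C (Cs.flatten ++ B)).1 (by simpa using this)
    · rw [← List.count_append]
      refine ih (X ++ C) fun j hj => ?_
      have := h (j + 1) (by simpa using hj)
      simpa [add_assoc] using this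

/-- The effect of moving a down step to the right of a factor, on the numbers of down steps
before the up steps. -/
theorem downsBefore_move (A C B : List Bool) (j : ℕ) :
    downsBefore (A ++ false :: (C ++ B)) j = downsBefore (A ++ (C ++ false :: B)) j +
      if A.count true ≤ j ∧ j < A.count true + C.count true then 1 else 0 := by
  rcases lt_or_ge j (A.count true) with h | h
  · rw [downsBefore_append_of_lt _ _ _ h, downsBefore_append_of_lt _ _ _ h, if_neg (by omega)]
    rfl
  · obtain ⟨j, rfl⟩ := Nat.exists_eq_add_of_le h
    rw [downsBefore_append_add, downsBefore_append_add]
    rcases lt_or_ge j (C.count true) with h' | h'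
    · rw [if_pos (by omega), downsBefore, downsBefore_append_of_lt _ _ _ h',
        downsBefore_append_of_lt _ _ _ h']
      omega
    · obtain ⟨j, rfl⟩ := Nat.exists_eq_add_of_le h'
      rw [if_neg (by omega), downsBefore, downsBefore_append_add, downsBefore_append_add,
        downsBefore]
      omega

theorem altBefore_move (δ : ℕ → ℤ) (A C B : List Bool) (j : ℕ) :
    altBefore δ 0 (A ++ (C ++ false :: B)) j = altBefore δ 0 (A ++ false :: (C ++ B)) j +
      if A.count true ≤ j ∧ j < A.count true + C.count true then 1 else 0 := by
  simp only [altBefore, downsBefore_move A C B j]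
  split_ifs <;> push_cast <;> ring

theorem deltaRot_iff (δ : ℕ → ℤ) (R R' : List Bool) :
    DeltaRot δ R R' ↔ ∃ A C B, R = A ++ false :: (C ++ B) ∧ R' = A ++ (C ++ false :: B) ∧
      IsExc δ (A.count true) C := by
  have key : ∀ A C B : List Bool,
      IsDeltaExcAt δ (A ++ false :: (C ++ B)) (A.length + 1) C ↔ IsExc δ (A.count true) C := by
    intro A C B
    simpa using isDeltaExcAt_iff δ (A ++ [false]) C B
  constructor
  · rintro ⟨A, C, B, rfl, rfl, h⟩
    exact ⟨A, C, B, rfl, rfl, (key A C B).1 h⟩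
  · rintro ⟨A, C, B, rfl, rfl, h⟩
    exact ⟨A, C, B, rfl, rfl, (key A C B).2 h⟩

theorem IsExc.count_pos {δ : ℕ → ℤ} {a : ℕ} {C : List Bool} (hC : IsExc δ a C) :
    0 < C.count true := by
  obtain ⟨C', rfl⟩ := hC.1
  simp

/-- The up steps of an excursion are the maximal run of up steps starting strictly above its
first up step. -/
theorem altBefore_excursion {δ : ℕ → ℤ} (hδ : IsIncFun δ) (X C B : List Bool)
    (hC : IsExc δ (X.count true) C) :
    (∀ j, X.count true < j → j < X.count true + C.count true →
      altBefore δ 0 (X ++ (C ++ B)) (X.count true) < altBefore δ 0 (X ++ (C ++ B)) j) ∧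
    altBefore δ 0 (X ++ (C ++ B)) (X.count true + C.count true) ≤
      altBefore δ 0 (X ++ (C ++ B)) (X.count true) := by
  have h0 : altBefore δ 0 (X ++ (C ++ B)) (X.count true) = wordElev δ 0 X := by
    obtain ⟨C', hC'⟩ := hC.1
    have := altBefore_append_add δ 0 X (C ++ B) 0
    rw [add_zero] at this
    rw [this, hC']
    simp [altBefore, downsBefore]
  rw [h0]
  refine ⟨fun j h1 h2 => ?_, ?_⟩
  · obtain ⟨j, rfl⟩ := Nat.exists_eq_add_of_lt h1
    obtain ⟨U, V, hU, hUj, hUe⟩ := exists_prefix_altBefore δ (X.count true) C (j + 1) (by omega)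
    rw [add_assoc, altBefore_append_add, zero_add]
    have hlt : altBefore δ (X.count true) (C ++ B) (j + 1) =
        altBefore δ (X.count true) C (j + 1) := by
      simp only [altBefore]
      rw [downsBefore_append_of_lt _ _ _ (by omega)]
    have := hC.pos_of_prefix hδ U (true :: V) hU (by rintro rfl; simp at hUj) (by simp)
    omega
  · rw [altBefore_append_add]
    have := altBefore_append_add δ (0 + X.count true) C B 0
    rw [add_zero] at this
    rw [this, zero_add, hC.2.1]
    simp [altBefore]

theorem altLE.altBefore_le {δ : ℕ → ℤ} {R R' : List Bool} (h : altLE δ R R') (j : ℕ) :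
    altBefore δ 0 R j ≤ altBefore δ 0 R' j := by
  induction h with
  | refl => exact le_rfl
  | tail _ h ih =>
    obtain ⟨A, C, B, rfl, rfl, -⟩ := (deltaRot_iff _ _ _).1 h
    rw [altBefore_move]
    split_ifs <;> omega

theorem DeltaRot.not_altLE {δ : ℕ → ℤ} {R R' : List Bool} (h : DeltaRot δ R R') :
    ¬ altLE δ R' R := by
  obtain ⟨A, C, B, rfl, rfl, hC⟩ := (deltaRot_iff _ _ _).1 h
  intro h'
  have := h'.altBefore_le (A.count true)
  have hp := hC.count_pos
  rw [altBefore_move, if_pos (by omega)] at this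
  omega

/-- The up steps that start strictly above `u_m` and follow it without interruption keep doing so
along the alt-Tamari order. -/
theorem altLE.above_mono {δ : ℕ → ℤ} (hδ : IsIncFun δ) {R R' : List Bool} (h : altLE δ R R')
    {m i : ℕ} (hR : ∀ j, m < j → j ≤ i → altBefore δ 0 R m < altBefore δ 0 R j) :
    ∀ j, m < j → j ≤ i → altBefore δ 0 R' m < altBefore δ 0 R' j := by
  induction h with
  | refl => exact hR
  | tail _ h ih =>
    obtain ⟨A, C, B, rfl, rfl, hC⟩ := (deltaRot_iff _ _ _).1 h
    intro j hj hji
    have hA := altBefore_excursion hδ (A ++ [false]) C B (by simpa using hC)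
    simp only [List.count_append, List.append_assoc, List.singleton_append] at hA
    simp only [List.count_singleton, beq_true, Bool.false_eq_true, if_false, add_zero] at hA
    have h1 := ih j hj hji
    rw [altBefore_move, altBefore_move]
    by_cases hm : A.count true ≤ m ∧ m < A.count true + C.count true
    · rw [if_pos hm]
      have hjr : j < A.count true + C.count true := by
        by_contra hcon
        have h2 := ih (A.count true + C.count true) hm.2 (by omega)
        rcases hm.1.eq_or_lt with h3 | h3
        · rw [← h3] at h2
          omega
        · have := hA.1 m h3 hm.2
          omega
      rw [if_pos (by omega)]
      omega
    · rw [if_neg hm]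
      split_ifs <;> omega

/-- Below the top of a right interval, the bottom has a single rotation. -/
theorem eq_of_deltaRot_of_altLE {δ : ℕ → ℤ} (hδ : IsIncFun δ) {A B R : List Bool}
    {C : List Bool} {Cs : List (List Bool)} (hCs : AreExcs δ (A.count true) (C :: Cs))
    (hR : DeltaRot δ (A ++ false :: ((C :: Cs).flatten ++ B)) R)
    (hRQ : altLE δ R (A ++ ((C :: Cs).flatten ++ false :: B))) :
    R = (A ++ C) ++ false :: (Cs.flatten ++ B) := by
  obtain ⟨A', C', B', hP, rfl, hC'⟩ := (deltaRot_iff _ _ _).1 hR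
  have hp := hC'.count_pos
  obtain ⟨D', hD'⟩ := hC'.1
  obtain ⟨D, hD⟩ := hCs.1.1
  set W := (C :: Cs).flatten with hW
  set P := A ++ false :: (W ++ B) with hPdef
  have hF' : ∀ j, altBefore δ 0 (A' ++ (C' ++ false :: B')) j = altBefore δ 0 P j +
      if A'.count true ≤ j ∧ j < A'.count true + C'.count true then 1 else 0 := by
    intro j
    rw [hP, altBefore_move]
  have hFQ := altBefore_move δ A W B
  rw [← hPdef] at hFQ
  have hrange : A.count true ≤ A'.count true ∧
      A'.count true < A.count true + W.count true := by
    by_contra hcon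
    have := hRQ.altBefore_le (A'.count true)
    rw [hF', hFQ, if_neg hcon, if_pos (by omega)] at this
    omega
  have hi : A.count true = A'.count true := by
    by_contra hne
    have hlt : A.count true < A'.count true := by omega
    have hlow : altBefore δ 0 P (A.count true) ≤ altBefore δ 0 P (A'.count true) := by
      have hsplit : ∀ j < W.count true,
          altBefore δ 0 P (A.count true + j) = wordElev δ 0 (A ++ [false]) +
            altBefore δ (A.count true) W j := by
        intro j hj
        have := altBefore_append_add δ 0 (A ++ [false]) (W ++ B) j
        simp only [List.append_assoc, List.singleton_append] at this
        rw [← hPdef] at this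
        simp at this
        rw [this]
        simp only [altBefore]
        rw [downsBefore_append_of_lt _ _ _ hj]
      obtain ⟨j, hj⟩ := Nat.exists_eq_add_of_le hlt.le
      have h0 := hsplit 0 (by omega)
      have hj' := hsplit j (by omega)
      obtain ⟨U, V, hU, -, hUe⟩ :=
        exists_prefix_altBefore δ (A.count true) W j (by omega)
      have := hCs.nonneg_of_prefix hδ U _ hU
      have hz : altBefore δ (A.count true) W 0 = 0 := by
        simp [hW, hD, altBefore, downsBefore]
      rw [hj, hj', hUe]
      rw [add_zero] at h0
      omega
    have hvalley : altBefore δ 0 P (A'.count true) ≤ altBefore δ 0 P (A'.count true - 1) := by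
      have h1 : downsBefore P (A'.count true) = A'.count false + 1 := by
        rw [hP]
        have := downsBefore_append_add A' (false :: (C' ++ B')) 0
        rw [add_zero] at this
        rw [this, hD']
        simp [downsBefore]
      have h2 : downsBefore P (A'.count true - 1) ≤ A'.count false := by
        rw [hP, downsBefore_append_of_lt _ _ _ (by omega)]
        exact downsBefore_le_count _ _
      obtain ⟨i, hi⟩ := Nat.exists_eq_add_of_lt hlt
      rw [hi] at h1 h2 ⊢
      simp only [add_tsub_cancel_right] at h2 ⊢
      simp only [altBefore, Finset.sum_range_succ]
      rcases hδ (0 + (A.count true + i) + 1) with h' | h' <;> rw [h'] <;> omega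
    obtain ⟨m, ⟨hmA, hmi, hmle⟩, hmax⟩ : ∃ m, (A.count true ≤ m ∧ m < A'.count true ∧
        altBefore δ 0 P m ≤ altBefore δ 0 P (A'.count true)) ∧
        ∀ j, m < j → j < A'.count true →
          altBefore δ 0 P (A'.count true) < altBefore δ 0 P j := by
      classical
      let S := (Finset.Ico (A.count true) (A'.count true)).filter fun m =>
        altBefore δ 0 P m ≤ altBefore δ 0 P (A'.count true)
      have hS : S.Nonempty := ⟨A.count true, by simp [S, hlt, hlow]⟩
      have hmem := Finset.mem_filter.1 (S.max'_mem hS)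
      rw [Finset.mem_Ico] at hmem
      refine ⟨S.max' hS, ⟨hmem.1.1, hmem.1.2, hmem.2⟩, fun j h1 h2 => ?_⟩
      by_contra hcon
      have : j ∈ S := by
        simp only [S, Finset.mem_filter, Finset.mem_Ico]
        exact ⟨⟨by omega, h2⟩, not_lt.1 hcon⟩
      have := S.le_max' j this
      omega
    have hmeq : altBefore δ 0 P m = altBefore δ 0 P (A'.count true) := by
      refine le_antisymm hmle ?_
      rcases (show m + 1 ≤ A'.count true by omega).eq_or_lt with h | h
      · rwa [← h, Nat.add_sub_cancel, h] at hvalley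
      · have h1 := hmax (m + 1) (by omega) h
        have h2 := altBefore_succ_le hδ 0 P m
        omega
    have habove : ∀ j, m < j → j ≤ A'.count true →
        altBefore δ 0 (A' ++ (C' ++ false :: B')) m <
          altBefore δ 0 (A' ++ (C' ++ false :: B')) j := by
      intro j h1 h2
      rw [hF', hF', if_neg (by omega)]
      rcases h2.eq_or_lt with rfl | h2
      · rw [if_pos (by omega)]
        omega
      · rw [if_neg (by omega)]
        have := hmax j h1 h2
        omega
    have := hRQ.above_mono hδ habove _ hmi le_rfl
    rw [hFQ, hFQ, if_pos (by omega), if_pos (by omega)] at this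
    omega
  have hsplit : (A ++ [false]) ++ true :: (D ++ (Cs.flatten ++ B)) =
      (A' ++ [false]) ++ true :: (D' ++ B') := by
    simpa [hPdef, hW, hD, hD'] using hP
  obtain ⟨h1, h2⟩ := append_up_inj hsplit (by simpa using hi)
  obtain rfl : A = A' := by simpa using h1
  have h3 : C ++ (Cs.flatten ++ B) = C' ++ B' := by simp [hD, hD', h2]
  obtain rfl := hCs.1.eq_of_append_eq hC' h3
  rw [← List.append_cancel_left h3]
  simp

theorem IsDyckWord.move {n : ℕ} {A C B : List Bool}
    (h : IsDyckWord n (A ++ false :: (C ++ B))) : IsDyckWord n (A ++ (C ++ false :: B)) := by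
  obtain ⟨h1, h2, h3⟩ := h
  refine ⟨by simpa using h1, by simp at h2 ⊢; omega, ?_⟩
  rintro p ⟨s, hs⟩
  rw [List.append_eq_append_iff] at hs
  rcases hs with ⟨p', rfl, -⟩ | ⟨p', rfl, hs⟩
  · exact h3 p ⟨p' ++ false :: (C ++ B), by simp⟩
  · rw [eq_comm, List.append_eq_append_iff] at hs
    rcases hs with ⟨q, rfl, -⟩ | ⟨q, rfl, hs⟩
    · have := h3 (A ++ false :: p') ⟨q ++ B, by simp⟩
      simp at this ⊢
      omega
    · cases q with
      | nil =>
        have := h3 (A ++ false :: C) ⟨B, by simp⟩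
        simp at this ⊢
        omega
      | cons b q =>
        simp only [List.cons_append, List.cons.injEq] at hs
        obtain ⟨rfl, rfl⟩ := hs
        have := h3 (A ++ false :: (C ++ q)) ⟨s, by simp⟩
        simp at this ⊢
        omega

theorem deltaRot_head {δ : ℕ → ℤ} {A B C : List Bool} {Cs : List (List Bool)}
    (hC : IsExc δ (A.count true) C) :
    DeltaRot δ (A ++ false :: ((C :: Cs).flatten ++ B))
      ((A ++ C) ++ false :: (Cs.flatten ++ B)) :=
  (deltaRot_iff _ _ _).2 ⟨A, C, Cs.flatten ++ B, by simp, by simp, hC⟩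

/-- The elements of a right interval above its bottom lie above the first rotation. -/
theorem altLE.eq_or_altLE {δ : ℕ → ℤ} (hδ : IsIncFun δ) {A B R : List Bool}
    {C : List Bool} {Cs : List (List Bool)} (hCs : AreExcs δ (A.count true) (C :: Cs))
    (hR : altLE δ (A ++ false :: ((C :: Cs).flatten ++ B)) R)
    (hRQ : altLE δ R (A ++ ((C :: Cs).flatten ++ false :: B))) :
    R = A ++ false :: ((C :: Cs).flatten ++ B) ∨
      altLE δ ((A ++ C) ++ false :: (Cs.flatten ++ B)) R := by
  rcases Relation.ReflTransGen.cases_head hR with h | ⟨R₁, h1, h2⟩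
  · exact Or.inl h.symm
  · right
    rwa [← eq_of_deltaRot_of_altLE hδ hCs h1 (Relation.ReflTransGen.trans h2 hRQ)]

theorem altLE_right_interval {δ : ℕ → ℤ} (A B : List Bool) (Cs : List (List Bool))
    (hCs : AreExcs δ (A.count true) Cs) :
    altLE δ (A ++ false :: (Cs.flatten ++ B)) (A ++ (Cs.flatten ++ false :: B)) := by
  induction Cs generalizing A with
  | nil => exact Relation.ReflTransGen.refl
  | cons C Cs ih =>
    refine Relation.ReflTransGen.head (deltaRot_head hCs.1) ?_
    simpa [altLE] using ih (A ++ C) (by simpa using hCs.2)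

theorem right_interval_total {δ : ℕ → ℤ} (hδ : IsIncFun δ) (A B : List Bool)
    (Cs : List (List Bool)) (hCs : AreExcs δ (A.count true) Cs) (R R' : List Bool)
    (hR : altLE δ (A ++ false :: (Cs.flatten ++ B)) R)
    (hRQ : altLE δ R (A ++ (Cs.flatten ++ false :: B)))
    (hR' : altLE δ (A ++ false :: (Cs.flatten ++ B)) R')
    (hRQ' : altLE δ R' (A ++ (Cs.flatten ++ false :: B))) :
    altLE δ R R' ∨ altLE δ R' R := by
  induction Cs generalizing A with
  | nil => exact Or.inl (Relation.ReflTransGen.trans hRQ hR')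
  | cons C Cs ih =>
    rcases hR.eq_or_altLE hδ hCs hRQ with rfl | h
    · exact Or.inl hR'
    rcases hR'.eq_or_altLE hδ hCs hRQ' with rfl | h'
    · exact Or.inr hR
    exact ih (A ++ C) (by simpa using hCs.2) h (by simpa using hRQ) h' (by simpa using hRQ')

theorem right_interval_chain {δ : ℕ → ℤ} (n : ℕ) (A B : List Bool)
    (Cs : List (List Bool)) (hCs : AreExcs δ (A.count true) Cs)
    (hP : IsDyckWord n (A ++ false :: (Cs.flatten ++ B))) :
    HasChainIn (DyckSet n) (altLE δ) (A ++ false :: (Cs.flatten ++ B))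
      (A ++ (Cs.flatten ++ false :: B)) Cs.length := by
  induction Cs generalizing A with
  | nil => exact ⟨fun _ => A ++ false :: B, by simp, by simp, fun _ _ => hP, by simp⟩
  | cons C Cs ih =>
    have hrot := deltaRot_head (B := B) (Cs := Cs) hCs.1
    have hP' : IsDyckWord n ((A ++ C) ++ false :: (Cs.flatten ++ B)) := by
      simpa using IsDyckWord.move (A := A) (C := C) (B := Cs.flatten ++ B) (by simpa using hP)
    obtain ⟨c, h0, hk, hS, hlt⟩ := ih (A ++ C) (by simpa using hCs.2) hP'
    refine ⟨fun i => Nat.casesOn i (A ++ false :: ((C :: Cs).flatten ++ B)) c, rfl, ?_, ?_, ?_⟩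
    · simpa using hk
    · rintro (_ | i) hi
      · exact hP
      · exact hS i (by simpa using hi)
    · rintro (_ | i) hi
      · refine ⟨?_, ?_⟩
        · simpa [h0, altLE] using Relation.ReflTransGen.single hrot
        · simpa [h0] using hrot.not_altLE
      · exact hlt i (by simpa using hi)

theorem altLE_of_chain {δ : ℕ → ℤ} {c : ℕ → List Bool} {m : ℕ}
    (hc : ∀ i < m, ltOf (altLE δ) (c i) (c (i + 1))) (i : ℕ) (hi : i ≤ m) :
    altLE δ (c i) (c m) := by
  induction m with
  | zero =>
    obtain rfl : i = 0 := by omega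
    exact Relation.ReflTransGen.refl
  | succ m ih =>
    rcases hi.eq_or_lt with rfl | hi
    · exact Relation.ReflTransGen.refl
    · exact Relation.ReflTransGen.trans (ih (fun i hi => hc i (by omega)) (by omega))
        (hc m (by omega)).1

theorem right_interval_chain_le {δ : ℕ → ℤ} (hδ : IsIncFun δ) (A B : List Bool)
    (Cs : List (List Bool)) (hCs : AreExcs δ (A.count true) Cs) (m : ℕ) (c : ℕ → List Bool)
    (hP : altLE δ (A ++ false :: (Cs.flatten ++ B)) (c 0))
    (hQ : altLE δ (c m) (A ++ (Cs.flatten ++ false :: B)))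
    (hc : ∀ i < m, ltOf (altLE δ) (c i) (c (i + 1))) : m ≤ Cs.length := by
  induction Cs generalizing A m c with
  | nil =>
    by_contra hm
    simp only [List.length_nil, not_le] at hm
    exact (hc 0 hm).2 (Relation.ReflTransGen.trans (altLE_of_chain hc 1 hm)
      (Relation.ReflTransGen.trans hQ hP))
  | cons C Cs ih =>
    cases m with
    | zero => simp
    | succ m =>
      have h1 := Relation.ReflTransGen.trans hP (hc 0 (by omega)).1
      have h1Q := Relation.ReflTransGen.trans (altLE_of_chain hc 1 (by omega)) hQ
      rcases altLE.eq_or_altLE hδ hCs h1 h1Q with h | h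
      · exact absurd (h ▸ hP) (hc 0 (by omega)).2
      · simpa using ih (A ++ C) (by simpa using hCs.2) m (fun i => c (i + 1)) h
          (by simpa using hQ) fun i hi => hc (i + 1) (by omega)

/-- a right interval of height `k ≥ 2` in `Tam^δ_n` is linear of
height `k`. -/
theorem stmt15 (n k : ℕ) (hk : 2 ≤ k) (δ : ℕ → ℤ) (hδ : IsIncFun δ)
    (P Q A B : List Bool) (Cs : List (List Bool)) (hlen : Cs.length = k)
    (hP : IsDyckWord n P) (hQ : IsDyckWord n Q)
    (hPd : P = A ++ false :: (Cs.flatten ++ B))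
    (hQd : Q = A ++ (Cs.flatten ++ false :: B))
    (hC : ∀ j < k, IsDeltaExcAt δ P (A.length + 1 + ((Cs.take j).flatten).length)
      (Cs.getD j [])) :
    altLE δ P Q ∧ LinearInterval (DyckSet n) (altLE δ) P Q ∧
      IntervalHeight (DyckSet n) (altLE δ) P Q k := by
  have hCs : AreExcs δ (A.count true) Cs := by
    have := areExcs_of_isDeltaExcAt δ (A ++ [false]) B Cs
      (fun j hj => by simpa [hPd] using hC j (hlen ▸ hj))
    simpa using this
  subst hPd hQd hlen
  have hle := altLE_right_interval A B Cs hCs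
  refine ⟨hle, ⟨hP, hQ, hle, fun R R' _ _ => right_interval_total hδ A B Cs hCs R R'⟩,
    right_interval_chain n A B Cs hCs hP, ?_⟩
  rintro m ⟨c, h0, hm, -, hc⟩
  exact right_interval_chain_le hδ A B Cs hCs m c (h0 ▸ Relation.ReflTransGen.refl)
    (hm ▸ Relation.ReflTransGen.refl) hc
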